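/- Let α, β > 0 and b < c, and suppose V ∈ L^∞(ℝ) satisfies V(x) ≥ α for a.e. x ∈ (−∞,b) ∪ (c,∞) and V(x) = −β for x ∈ (b,c). If √β·(c−b) ≥ π, then there exists a ∈ [b,c] such that F(a;V) = m(V); in particular the infimum inf_{a∈ℝ} F(a;V) = m(V) is attained at a point of [b,c]. -/

import Mathlib

open MeasureTheory Filter Real Topology

/-- The supremum norm `‖u‖_∞` of a (bounded continuous) function `u : ℝ → ℝ`. -/
noncomputable def supNorm (u : ℝ → ℝ) : ℝ := ⨆ x : ℝ, |u x|

/-- `u` is (the continuous representative of) an element of `H¹(ℝ)`: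
`u` is continuous, `u ∈ L²(ℝ)`, and there is a weak derivative `u' ∈ L²(ℝ)`,
i.e. `u x = u 0 + ∫_0^x u'`. -/
def IsH1 (u : ℝ → ℝ) : Prop :=
  Continuous u ∧ MemLp u 2 (volume : Measure ℝ) ∧
    ∃ u' : ℝ → ℝ, MemLp u' 2 (volume : Measure ℝ) ∧
      ∀ x : ℝ, u x = u 0 + ∫ t in (0:ℝ)..x, u' t

/-- The Dirichlet energy `∫_ℝ |u'(x)|² dx`.  (For `u ∈ H¹(ℝ)` the classical
derivative `deriv u` exists a.e. and coincides a.e. with the weak derivative.) -/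
noncomputable def energy (u : ℝ → ℝ) : ℝ := ∫ x : ℝ, (deriv u x) ^ 2

/-- `I(u;V) = ∫_ℝ (|u'(x)|² + V(x)|u(x)|²) dx` for a potential `V : ℝ → ℝ`. -/
noncomputable def IV (V : ℝ → ℝ) (u : ℝ → ℝ) : ℝ :=
  ∫ x : ℝ, ((deriv u x) ^ 2 + V x * (u x) ^ 2)

/-- Membership in `K_a = { u ∈ H¹(ℝ) ; u(a) = ‖u‖_∞ = 1 }`. -/
def InKa (a : ℝ) (u : ℝ → ℝ) : Prop := IsH1 u ∧ u a = 1 ∧ supNorm u = 1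

/-- `F(a;V) = inf { I(u;V) ; u ∈ K_a }`. -/
noncomputable def FV (V : ℝ → ℝ) (a : ℝ) : ℝ :=
  sInf {r : ℝ | ∃ u : ℝ → ℝ, InKa a u ∧ r = IV V u}

/-- `m(V) = inf { I(u;V)/‖u‖_∞² ; u ∈ H¹(ℝ), u ≢ 0 }`. -/
noncomputable def mV (V : ℝ → ℝ) : ℝ :=
  sInf {r : ℝ | ∃ u : ℝ → ℝ, IsH1 u ∧ u ≠ 0 ∧ r = IV V u / (supNorm u) ^ 2}

/-!
Let `k = √β` and let `φ` be the arch of `cos (k (x - a))` between its two zeros next to `a`,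
extended by zero; its support has length `π / k ≤ c - b`, so it fits into the well for
`a = (b + c) / 2`. After scaling and taking absolute values, a competitor for `m(V)` is some `f`
with `0 ≤ f ≤ 1`, and `f ⊔ φ` lies in `K_a`. The energy is modular,
`I(f ⊔ φ) + I(f ⊓ φ) = I(f) + I(φ)`, so it suffices that `I(φ) ≤ I(w)` for `w = f ⊓ φ`. Both
functions vanish outside an interval of length `π / k` on which `V ≤ -k²`. For the constant
potential `-k²` the Poincaré inequality gives `I(w) ≥ 0 = I(φ)`, and lowering the potential to `V`
favours `φ`, because `w² ≤ φ²`.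
-/

/-! ### The Dirichlet–Poincaré inequality -/

-- Picone's argument: `w'² - q w² - (T w²)' = (w' - T w)² ≥ 0`, and `T w²` vanishes at both ends.
lemma mul_integral_sq_le_of_riccati {w T : ℝ → ℝ} {a b q : ℝ} (hab : a ≤ b)
    (hw : AbsolutelyContinuousOnInterval w a b)
    (hw' : IntervalIntegrable (fun x => deriv w x ^ 2) volume a b)
    (hwa : w a = 0) (hwb : w b = 0) (hT : AbsolutelyContinuousOnInterval T a b)
    (hT' : ∀ x ∈ Set.Icc a b, HasDerivAt T (-q - T x ^ 2) x) :
    q * ∫ x in a..b, w x ^ 2 ≤ ∫ x in a..b, deriv w x ^ 2 := by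
  have hTw : AbsolutelyContinuousOnInterval (fun x => T x * (w x * w x)) a b :=
    hT.fun_mul (hw.fun_mul hw)
  have hw2 : IntervalIntegrable (fun x => q * w x ^ 2) volume a b :=
    ((hw.continuousOn.pow 2).intervalIntegrable).const_mul q
  have deriv_le : ∀ᵐ x ∂volume.restrict (Set.Icc a b),
      deriv (fun x => T x * (w x * w x)) x ≤ deriv w x ^ 2 - q * w x ^ 2 := by
    rw [ae_restrict_iff' measurableSet_Icc, ← Set.uIcc_of_le hab]
    filter_upwards [hw.ae_differentiableAt] with x hdiff hx
    have hwx := (hdiff hx).hasDerivAt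
    rw [((hT' x (Set.uIcc_of_le hab ▸ hx)).fun_mul (hwx.fun_mul hwx)).deriv]
    linear_combination sq_nonneg (deriv w x - T x * w x)
  have boundary : ∫ x in a..b, deriv (fun x => T x * (w x * w x)) x = 0 := by
    rw [hTw.integral_deriv_eq_sub, hwa, hwb]
    ring
  have mono := intervalIntegral.integral_mono_ae_restrict hab hTw.intervalIntegrable_deriv
    (hw'.sub hw2) deriv_le
  rw [boundary, intervalIntegral.integral_sub hw' hw2, intervalIntegral.integral_const_mul] at mono
  exact sub_nonneg.1 mono

lemma hasDerivAt_mul_sub (k m x : ℝ) : HasDerivAt (fun y => k * (y - m)) k x := by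
  simpa using ((hasDerivAt_id x).sub_const m).const_mul k

lemma hasDerivAt_neg_mul_tan {k m x : ℝ} (hx : cos (k * (x - m)) ≠ 0) :
    HasDerivAt (fun y => -k * tan (k * (y - m))) (-k ^ 2 - (-k * tan (k * (x - m))) ^ 2) x := by
  refine (((hasDerivAt_tan hx).comp x (hasDerivAt_mul_sub k m x)).const_mul (-k)).congr_deriv ?_
  rw [tan_eq_sin_div_cos]
  field_simp
  linear_combination k ^ 2 * sin_sq_add_cos_sq (k * (x - m))

lemma absolutelyContinuousOnInterval_neg_mul_tan {k m a b : ℝ}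
    (h : ∀ x ∈ Set.uIcc a b, cos (k * (x - m)) ≠ 0) :
    AbsolutelyContinuousOnInterval (fun x => -k * tan (k * (x - m))) a b := by
  refine ContDiffOn.absolutelyContinuousOnInterval fun x hx => ContDiffAt.contDiffWithinAt ?_
  have hlin : ContDiffAt ℝ 1 (fun y => k * (y - m)) x := by fun_prop
  exact contDiffAt_const.mul (ContDiffAt.comp (g := tan) x (contDiffAt_tan.2 (h x hx)) hlin)

-- The strict bound keeps the Riccati solution `-k tan (k (x - (a + b) / 2))` finite at both ends.
lemma sq_mul_integral_sq_le_of_mul_lt_pi {w : ℝ → ℝ} {a b k : ℝ} (hab : a ≤ b)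
    (hw : AbsolutelyContinuousOnInterval w a b)
    (hw' : IntervalIntegrable (fun x => deriv w x ^ 2) volume a b)
    (hwa : w a = 0) (hwb : w b = 0) (hk : 0 ≤ k) (hkab : k * (b - a) < π) :
    k ^ 2 * ∫ x in a..b, w x ^ 2 ≤ ∫ x in a..b, deriv w x ^ 2 := by
  have hcos : ∀ x ∈ Set.Icc a b, cos (k * (x - (a + b) / 2)) ≠ 0 := by
    intro x hx
    have hleft := mul_nonneg hk (sub_nonneg.2 hx.1)
    have hright := mul_nonneg hk (sub_nonneg.2 hx.2)
    exact (cos_pos_of_mem_Ioo ⟨by linarith, by linarith⟩).ne'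
  exact mul_integral_sq_le_of_riccati hab hw hw' hwa hwb
    (absolutelyContinuousOnInterval_neg_mul_tan (Set.uIcc_of_le hab ▸ hcos))
    fun x hx => hasDerivAt_neg_mul_tan (hcos x hx)

theorem sq_mul_integral_sq_le_integral_deriv_sq {w : ℝ → ℝ} {a b k : ℝ} (hab : a ≤ b)
    (hw : AbsolutelyContinuousOnInterval w a b)
    (hw' : IntervalIntegrable (fun x => deriv w x ^ 2) volume a b)
    (hwa : w a = 0) (hwb : w b = 0) (hk : 0 ≤ k) (hkab : k * (b - a) ≤ π) :
    k ^ 2 * ∫ x in a..b, w x ^ 2 ≤ ∫ x in a..b, deriv w x ^ 2 := by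
  have hlim : Tendsto (fun s : ℝ => (s * k) ^ 2 * ∫ x in a..b, w x ^ 2) (𝓝[<] 1)
      (𝓝 ((1 * k) ^ 2 * ∫ x in a..b, w x ^ 2)) :=
    Continuous.continuousWithinAt (by fun_prop)
  rw [one_mul] at hlim
  refine le_of_tendsto hlim ?_
  filter_upwards [Ioo_mem_nhdsLT zero_lt_one] with s hs
  refine sq_mul_integral_sq_le_of_mul_lt_pi hab hw hw' hwa hwb (mul_nonneg hs.1.le hk) ?_
  calc s * k * (b - a) = s * (k * (b - a)) := mul_assoc _ _ _
    _ ≤ s * π := mul_le_mul_of_nonneg_left hkab hs.1.le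
    _ < π := mul_lt_of_lt_one_left pi_pos hs.2

/-! ### Lattice operations and derivatives -/

lemma deriv_eq_of_eventuallyLE_of_eq {f g : ℝ → ℝ} {x : ℝ} (hf : DifferentiableAt ℝ f x)
    (hg : DifferentiableAt ℝ g x) (hle : f ≤ᶠ[𝓝 x] g) (hx : f x = g x) :
    deriv f x = deriv g x := by
  have hmin : IsLocalMin (g - f) x := by
    filter_upwards [hle] with y hy
    simpa [hx] using hy
  have hzero := hmin.deriv_eq_zero
  rw [deriv_sub hg hf] at hzero
  exact (sub_eq_zero.1 hzero).symm

section Lattice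

variable {f g : ℝ → ℝ} {x : ℝ}

lemma deriv_sup_of_le (h : g x ≤ f x) (hf : DifferentiableAt ℝ f x)
    (hsup : DifferentiableAt ℝ (f ⊔ g) x) : deriv (f ⊔ g) x = deriv f x :=
  (deriv_eq_of_eventuallyLE_of_eq hf hsup (.of_forall fun _ => le_sup_left)
    (sup_eq_left.2 h).symm).symm

lemma deriv_inf_of_le (h : f x ≤ g x) (hf : DifferentiableAt ℝ f x)
    (hinf : DifferentiableAt ℝ (f ⊓ g) x) : deriv (f ⊓ g) x = deriv f x :=
  deriv_eq_of_eventuallyLE_of_eq hinf hf (.of_forall fun _ => inf_le_left) (inf_eq_left.2 h)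

lemma deriv_sup_sq_add_deriv_inf_sq (hf : DifferentiableAt ℝ f x) (hg : DifferentiableAt ℝ g x)
    (hsup : DifferentiableAt ℝ (f ⊔ g) x) (hinf : DifferentiableAt ℝ (f ⊓ g) x) :
    deriv (f ⊔ g) x ^ 2 + deriv (f ⊓ g) x ^ 2 = deriv f x ^ 2 + deriv g x ^ 2 := by
  rcases le_total (g x) (f x) with h | h
  · rw [inf_comm] at hinf ⊢
    rw [deriv_sup_of_le h hf hsup, deriv_inf_of_le h hg hinf]
  · rw [sup_comm] at hsup ⊢
    rw [deriv_sup_of_le h hg hsup, deriv_inf_of_le h hf hinf, add_comm]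

lemma norm_deriv_sup_le (hf : DifferentiableAt ℝ f x) (hg : DifferentiableAt ℝ g x) :
    ‖deriv (f ⊔ g) x‖ ≤ ‖deriv f x‖ + ‖deriv g x‖ := by
  by_cases hsup : DifferentiableAt ℝ (f ⊔ g) x
  · rcases le_total (g x) (f x) with h | h
    · rw [deriv_sup_of_le h hf hsup]
      exact le_add_of_nonneg_right (norm_nonneg _)
    · rw [sup_comm] at hsup ⊢
      rw [deriv_sup_of_le h hg hsup]
      exact le_add_of_nonneg_left (norm_nonneg _)
  · rw [deriv_zero_of_not_differentiableAt hsup, norm_zero]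
    positivity

lemma absolutelyContinuousOnInterval_sup {a b : ℝ} (hf : AbsolutelyContinuousOnInterval f a b)
    (hg : AbsolutelyContinuousOnInterval g a b) :
    AbsolutelyContinuousOnInterval (f ⊔ g) a b := by
  refine squeeze_zero (fun _ => Finset.sum_nonneg fun _ _ => dist_nonneg) (fun E => ?_)
    (by simpa using Tendsto.add hf hg)
  rw [← Finset.sum_add_distrib]
  exact Finset.sum_le_sum fun i _ => (abs_max_sub_max_le_max _ _ _ _).trans
    (max_le_add_of_nonneg (abs_nonneg _) (abs_nonneg _))

end Lattice

/-! ### The space `H¹(ℝ)` -/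

namespace IsH1

variable {u f g : ℝ → ℝ}

lemma memLp (hu : IsH1 u) : MemLp u 2 volume := hu.2.1

lemma absolutelyContinuousOnInterval (hu : IsH1 u) (a b : ℝ) :
    AbsolutelyContinuousOnInterval u a b := by
  obtain ⟨-, -, u', hu', h⟩ := hu
  have hint (x y : ℝ) : IntervalIntegrable u' volume x y :=
    ((hu'.locallyIntegrable (by norm_num)).integrableOn_isCompact isCompact_uIcc).intervalIntegrable
  have hprim : u = fun x => u a + ∫ t in a..x, u' t := by
    funext x
    rw [h x, h a, add_assoc, intervalIntegral.integral_add_adjacent_intervals (hint _ _) (hint _ _)]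
  rw [hprim]
  exact contDiffOn_const.absolutelyContinuousOnInterval.fun_add
    ((hint a b).absolutelyContinuousOnInterval_intervalIntegral Set.left_mem_uIcc)

lemma exists_ae_hasDerivAt (hu : IsH1 u) :
    ∃ u' : ℝ → ℝ, MemLp u' 2 volume ∧ ∀ᵐ x, HasDerivAt u (u' x) x := by
  obtain ⟨-, -, u', hu', h⟩ := hu
  refine ⟨u', hu', ?_⟩
  filter_upwards [LocallyIntegrable.ae_hasDerivAt_integral (hu'.locallyIntegrable (by norm_num))]
    with x hx
  rw [funext h]
  exact (hx 0).const_add (u 0)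

lemma ae_differentiableAt (hu : IsH1 u) : ∀ᵐ x, DifferentiableAt ℝ u x := by
  obtain ⟨u', -, h⟩ := hu.exists_ae_hasDerivAt
  exact h.mono fun _ hx => hx.differentiableAt

lemma memLp_deriv (hu : IsH1 u) : MemLp (deriv u) 2 volume := by
  obtain ⟨u', hu', h⟩ := hu.exists_ae_hasDerivAt
  exact (memLp_congr_ae (h.mono fun _ hx => hx.deriv)).2 hu'

lemma of_absolutelyContinuousOnInterval (hac : ∀ a b, AbsolutelyContinuousOnInterval u a b)
    (hu : MemLp u 2 volume) (hu' : MemLp (deriv u) 2 volume) : IsH1 u := by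
  refine ⟨continuous_iff_continuousAt.2 fun x => ?_, hu, deriv u, hu', fun x => ?_⟩
  · refine (hac (x - 1) (x + 1)).continuousOn.continuousAt ?_
    rw [Set.uIcc_of_le (by linarith)]
    exact Icc_mem_nhds (by linarith) (by linarith)
  · rw [(hac 0 x).integral_deriv_eq_sub, add_sub_cancel]

lemma of_lipschitzWith {K : NNReal} (hu : LipschitzWith K u) (hsupp : HasCompactSupport u) :
    IsH1 u :=
  .of_absolutelyContinuousOnInterval (fun _ _ => hu.lipschitzOnWith.absolutelyContinuousOnInterval)
    (hu.continuous.memLp_of_hasCompactSupport hsupp)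
    (hsupp.deriv.memLp_of_bound (aestronglyMeasurable_deriv u volume) K
      (ae_of_all _ fun _ => norm_deriv_le_of_lipschitz hu))

lemma const_smul (hu : IsH1 u) (s : ℝ) : IsH1 (s • u) := by
  refine .of_absolutelyContinuousOnInterval
    (fun a b => (hu.absolutelyContinuousOnInterval a b).const_smul s) (hu.memLp.const_smul s) ?_
  rw [show deriv (s • u) = s • deriv u from funext fun _ => deriv_const_smul_field s u]
  exact hu.memLp_deriv.const_smul s

lemma neg (hu : IsH1 u) : IsH1 (-u) := by
  simpa only [neg_one_smul] using hu.const_smul (-1)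

lemma sup (hf : IsH1 f) (hg : IsH1 g) : IsH1 (f ⊔ g) := by
  refine .of_absolutelyContinuousOnInterval
    (fun a b => absolutelyContinuousOnInterval_sup (hf.absolutelyContinuousOnInterval a b)
      (hg.absolutelyContinuousOnInterval a b)) (hf.memLp.sup hg.memLp) ?_
  refine (hf.memLp_deriv.norm.add hg.memLp_deriv.norm).mono' (aestronglyMeasurable_deriv _ _) ?_
  filter_upwards [hf.ae_differentiableAt, hg.ae_differentiableAt] with x hfx hgx
  exact norm_deriv_sup_le hfx hgx

lemma inf (hf : IsH1 f) (hg : IsH1 g) : IsH1 (f ⊓ g) := by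
  simpa only [neg_sup, neg_neg] using (hf.neg.sup hg.neg).neg

lemma abs (hu : IsH1 u) : IsH1 |u| := hu.sup hu.neg

lemma exists_abs_le (hu : IsH1 u) : ∃ C, ∀ x, |u x| ≤ C := by
  have hint : Integrable (fun x => deriv u x * u x + u x * deriv u x) :=
    (hu.memLp_deriv.integrable_mul hu.memLp).add (hu.memLp.integrable_mul hu.memLp_deriv)
  refine ⟨√(u 0 ^ 2 + ∫ t, ‖deriv u t * u t + u t * deriv u t‖), fun x => abs_le_sqrt ?_⟩
  have hac := hu.absolutelyContinuousOnInterval 0 x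
  calc u x ^ 2 = u 0 ^ 2 + ∫ t in (0 : ℝ)..x, (deriv u t * u t + u t * deriv u t) := by
        rw [hac.integral_deriv_mul_eq_sub hac]
        ring
    _ ≤ u 0 ^ 2 + ‖∫ t in (0 : ℝ)..x, (deriv u t * u t + u t * deriv u t)‖ := by
        gcongr
        exact le_norm_self _
    _ ≤ u 0 ^ 2 + ∫ t, ‖deriv u t * u t + u t * deriv u t‖ := by
        gcongr
        exact intervalIntegral.norm_integral_le_integral_norm_uIoc.trans
          (setIntegral_le_integral hint.norm (ae_of_all _ fun _ => norm_nonneg _))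

lemma abs_le_supNorm (hu : IsH1 u) (x : ℝ) : |u x| ≤ supNorm u := by
  obtain ⟨C, hC⟩ := hu.exists_abs_le
  exact le_ciSup (f := fun x => |u x|) ⟨C, Set.forall_mem_range.2 hC⟩ x

lemma supNorm_pos (hu : IsH1 u) (hne : u ≠ 0) : 0 < supNorm u := by
  obtain ⟨x, hx⟩ := Function.ne_iff.1 hne
  exact (abs_pos.2 hx).trans_le (hu.abs_le_supNorm x)

lemma inKa {a : ℝ} (hu : IsH1 u) (hle : ∀ x, |u x| ≤ 1) (ha : u a = 1) : InKa a u := by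
  refine ⟨hu, ha, le_antisymm (ciSup_le hle) ?_⟩
  simpa [ha] using hu.abs_le_supNorm a

end IsH1

/-! ### The energy functional -/

section Energy

variable {V W u f g : ℝ → ℝ}

lemma IsH1.integrable_energyDensity (hu : IsH1 u) (hV : MemLp V ⊤ volume) :
    Integrable (fun x => deriv u x ^ 2 + V x * u x ^ 2) :=
  hu.memLp_deriv.integrable_sq.add
    (hV.integrable_mul (memLp_one_iff_integrable.2 hu.memLp.integrable_sq))

lemma IV_smul (V u : ℝ → ℝ) (s : ℝ) : IV V (s • u) = s ^ 2 * IV V u := by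
  unfold IV
  rw [← integral_const_mul]
  congr with x
  rw [deriv_const_smul_field, Pi.smul_apply, smul_eq_mul, smul_eq_mul]
  ring

lemma IV_neg (V u : ℝ → ℝ) : IV V (-u) = IV V u := by
  rw [← neg_one_smul ℝ u, IV_smul, neg_one_sq, one_mul]

lemma IV_sup_add_IV_inf (hV : MemLp V ⊤ volume) (hf : IsH1 f) (hg : IsH1 g) :
    IV V (f ⊔ g) + IV V (f ⊓ g) = IV V f + IV V g := by
  unfold IV
  rw [← integral_add ((hf.sup hg).integrable_energyDensity hV)
      ((hf.inf hg).integrable_energyDensity hV),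
    ← integral_add (hf.integrable_energyDensity hV) (hg.integrable_energyDensity hV)]
  refine integral_congr_ae ?_
  filter_upwards [hf.ae_differentiableAt, hg.ae_differentiableAt, (hf.sup hg).ae_differentiableAt,
    (hf.inf hg).ae_differentiableAt] with x hfx hgx hsup hinf
  have hderiv := deriv_sup_sq_add_deriv_inf_sq hfx hgx hsup hinf
  have hvalue : (f ⊔ g) x ^ 2 + (f ⊓ g) x ^ 2 = f x ^ 2 + g x ^ 2 := by
    rcases le_total (f x) (g x) with h | h <;> simp [h, add_comm]
  linear_combination hderiv + V x * hvalue

lemma IV_abs (hV : MemLp V ⊤ volume) (hu : IsH1 u) : IV V |u| = IV V u := by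
  have hmod := IV_sup_add_IV_inf hV hu hu.neg
  have hinf : u ⊓ -u = -|u| := by rw [abs, neg_sup, neg_neg, inf_comm]
  rw [hinf, IV_neg, IV_neg] at hmod
  change IV V |u| + IV V |u| = _ at hmod
  linarith

lemma neg_integral_negPart_le_IV (hV : MemLp V ⊤ volume) (hneg : Integrable fun x => (V x)⁻)
    (hu : IsH1 u) (hle : ∀ x, |u x| ≤ 1) : -∫ x, (V x)⁻ ≤ IV V u := by
  rw [← integral_neg]
  refine integral_mono hneg.neg (hu.integrable_energyDensity hV) fun x => ?_
  calc -(V x)⁻ ≤ -(V x)⁻ * u x ^ 2 := by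
        nlinarith [negPart_nonneg (V x), (sq_le_one_iff_abs_le_one (u x)).2 (hle x)]
    _ ≤ V x * u x ^ 2 := by
        gcongr
        exact neg_le.1 (neg_le_negPart (V x))
    _ ≤ deriv u x ^ 2 + V x * u x ^ 2 := le_add_of_nonneg_left (sq_nonneg _)

lemma IV_add_IV_le_of_ae_mul_sub_nonpos (hV : MemLp V ⊤ volume) (hW : MemLp W ⊤ volume)
    (hf : IsH1 f) (hg : IsH1 g) (h : ∀ᵐ x, (V x - W x) * (f x ^ 2 - g x ^ 2) ≤ 0) :
    IV V f + IV W g ≤ IV W f + IV V g := by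
  unfold IV
  rw [← integral_add (hf.integrable_energyDensity hV) (hg.integrable_energyDensity hW),
    ← integral_add (hf.integrable_energyDensity hW) (hg.integrable_energyDensity hV)]
  refine integral_mono_ae
    ((hf.integrable_energyDensity hV).add (hg.integrable_energyDensity hW))
    ((hf.integrable_energyDensity hW).add (hg.integrable_energyDensity hV)) ?_
  filter_upwards [h] with x hx
  linear_combination hx

lemma IV_eq_intervalIntegral {a b : ℝ} (hab : a ≤ b) (hsupp : Function.support u ⊆ Set.Icc a b)
    (V : ℝ → ℝ) : IV V u = ∫ x in a..b, (deriv u x ^ 2 + V x * u x ^ 2) := by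
  rw [intervalIntegral.integral_of_le hab, ← integral_Icc_eq_integral_Ioc]
  refine (setIntegral_eq_integral_of_forall_compl_eq_zero fun x hx => ?_).symm
  have hmem : x ∉ tsupport u := fun h => hx (closure_minimal hsupp isClosed_Icc h)
  rw [image_eq_zero_of_notMem_tsupport hmem,
    Function.notMem_support.1 fun h => hmem (support_deriv_subset h)]
  simp

lemma IV_neg_sq_nonneg {a b k : ℝ} (hu : IsH1 u) (hab : a ≤ b)
    (hsupp : Function.support u ⊆ Set.Ioo a b) (hk : 0 ≤ k) (hkab : k * (b - a) ≤ π) :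
    0 ≤ IV (fun _ => -k ^ 2) u := by
  have hua : u a = 0 := Function.notMem_support.1 fun h => (hsupp h).1.false
  have hub : u b = 0 := Function.notMem_support.1 fun h => (hsupp h).2.false
  have hderiv : IntervalIntegrable (fun x => deriv u x ^ 2) volume a b :=
    hu.memLp_deriv.integrable_sq.intervalIntegrable
  rw [IV_eq_intervalIntegral hab (hsupp.trans Set.Ioo_subset_Icc_self),
    intervalIntegral.integral_add hderiv
      (hu.memLp.integrable_sq.intervalIntegrable.const_mul _),
    intervalIntegral.integral_const_mul]
  linarith [sq_mul_integral_sq_le_integral_deriv_sq hab (hu.absolutelyContinuousOnInterval a b)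
    hderiv hua hub hk hkab]

end Energy

/-! ### The cosine bump -/

/-- The arch of `x ↦ cos (k (x - m))` around `m`, extended by zero: the ground state of
`-d²/dx² - k²` with Dirichlet conditions on an interval of length `π / k`. Truncating the phase at
`π / 2`, rather than the function, makes the Lipschitz bound immediate. -/
noncomputable def cosBump (k m x : ℝ) : ℝ := cos (min |k * (x - m)| (π / 2))

section CosBump

variable {k m x : ℝ}

lemma cosBump_nonneg (k m x : ℝ) : 0 ≤ cosBump k m x :=
  cos_nonneg_of_neg_pi_div_two_le_of_le
    ((neg_nonpos.2 pi_div_two_pos.le).trans (le_min (abs_nonneg _) pi_div_two_pos.le))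
    (min_le_right _ _)

lemma cosBump_le_one (k m x : ℝ) : cosBump k m x ≤ 1 := cos_le_one _

lemma cosBump_of_le (h : |k * (x - m)| ≤ π / 2) : cosBump k m x = cos (k * (x - m)) := by
  rw [cosBump, min_eq_left h, cos_abs]

lemma cosBump_eq_zero (h : π / 2 ≤ |k * (x - m)|) : cosBump k m x = 0 := by
  rw [cosBump, min_eq_right h, cos_pi_div_two]

lemma cosBump_self (k m : ℝ) : cosBump k m m = 1 := by
  simp [cosBump, pi_div_two_pos.le]

lemma lipschitzWith_cosBump (k m : ℝ) : LipschitzWith (Real.nnabs k) (cosBump k m) := by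
  refine LipschitzWith.of_dist_le_mul fun x y => ?_
  calc |cosBump k m x - cosBump k m y|
      ≤ |min |k * (x - m)| (π / 2) - min |k * (y - m)| (π / 2)| := by
        simpa [dist_eq, cosBump] using lipschitzWith_cos.dist_le_mul
          (min |k * (x - m)| (π / 2)) (min |k * (y - m)| (π / 2))
    _ ≤ |(|k * (x - m)| - |k * (y - m)|)| := by
        simpa using abs_min_sub_min_le_max |k * (x - m)| (π / 2) |k * (y - m)| (π / 2)
    _ ≤ |k * (x - m) - k * (y - m)| := abs_abs_sub_abs_le _ _
    _ = Real.nnabs k * dist x y := by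
        rw [← mul_sub, sub_sub_sub_cancel_right, abs_mul, coe_nnabs, dist_eq]

lemma abs_mul_sub_lt_pi_div_two_iff (hk : 0 < k) :
    |k * (x - m)| < π / 2 ↔ x ∈ Set.Ioo (m - π / (2 * k)) (m + π / (2 * k)) := by
  rw [← Real.ball_eq_Ioo, Metric.mem_ball, dist_eq, abs_mul, abs_of_pos hk, ← div_div,
    lt_div_iff₀' hk]

lemma support_cosBump_subset (hk : 0 < k) :
    Function.support (cosBump k m) ⊆ Set.Ioo (m - π / (2 * k)) (m + π / (2 * k)) := by
  intro x hx
  rw [← abs_mul_sub_lt_pi_div_two_iff hk]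
  by_contra! hge
  exact hx (cosBump_eq_zero hge)

lemma isH1_cosBump (hk : 0 < k) : IsH1 (cosBump k m) :=
  .of_lipschitzWith (lipschitzWith_cosBump k m) <| isCompact_Icc.of_isClosed_subset
    (isClosed_tsupport _)
    (closure_minimal ((support_cosBump_subset hk).trans Set.Ioo_subset_Icc_self) isClosed_Icc)

lemma deriv_cosBump (hk : 0 < k) (hx : x ∈ Set.Ioo (m - π / (2 * k)) (m + π / (2 * k))) :
    deriv (cosBump k m) x = -k * sin (k * (x - m)) := by
  have hcos : cosBump k m =ᶠ[𝓝 x] fun y => cos (k * (y - m)) := by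
    filter_upwards [Ioo_mem_nhds hx.1 hx.2] with y hy
    exact cosBump_of_le ((abs_mul_sub_lt_pi_div_two_iff hk).2 hy).le
  rw [hcos.deriv_eq, (hasDerivAt_mul_sub k m x).cos.deriv]
  ring

lemma IV_neg_sq_cosBump (hk : 0 < k) : IV (fun _ => -k ^ 2) (cosBump k m) = 0 := by
  have hr : 0 < π / (2 * k) := by positivity
  have hkr : k * (π / (2 * k)) = π / 2 := by field_simp
  have hderiv : ∀ x ∈ Set.Ioo (m - π / (2 * k)) (m + π / (2 * k)),
      HasDerivAt (fun y => -k * sin (k * (y - m)) * cos (k * (y - m)))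
        (deriv (cosBump k m) x ^ 2 + -k ^ 2 * cosBump k m x ^ 2) x := by
    intro x hx
    have hlin := hasDerivAt_mul_sub k m x
    refine ((hlin.sin.const_mul (-k)).fun_mul hlin.cos).congr_deriv ?_
    rw [deriv_cosBump hk hx, cosBump_of_le ((abs_mul_sub_lt_pi_div_two_iff hk).2 hx).le]
    ring
  rw [IV_eq_intervalIntegral (by linarith)
      ((support_cosBump_subset hk).trans Set.Ioo_subset_Icc_self),
    intervalIntegral.integral_eq_sub_of_hasDerivAt_of_le (by linarith) (by fun_prop) hderiv
      ((isH1_cosBump hk).integrable_energyDensity (memLp_top_const _)).intervalIntegrable]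
  simp [hkr]

lemma IV_cosBump_le {V w : ℝ → ℝ} (hk : 0 < k) (hV : MemLp V ⊤ volume)
    (hwell : ∀ᵐ x, x ∈ Set.Ioo (m - π / (2 * k)) (m + π / (2 * k)) → V x ≤ -k ^ 2)
    (hw : IsH1 w) (hle : |w| ≤ cosBump k m) : IV V (cosBump k m) ≤ IV V w := by
  have hsupp : Function.support w ⊆ Set.Ioo (m - π / (2 * k)) (m + π / (2 * k)) :=
    (Function.support_subset_iff'.2 fun x hx => abs_nonpos_iff.1 <|
      (hle x).trans_eq (Function.notMem_support.1 hx)).trans (support_cosBump_subset hk)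
  have hr : 0 < π / (2 * k) := by positivity
  have hcompare : IV V (cosBump k m) + IV (fun _ => -k ^ 2) w
      ≤ IV (fun _ => -k ^ 2) (cosBump k m) + IV V w := by
    refine IV_add_IV_le_of_ae_mul_sub_nonpos hV (memLp_top_const _) (isH1_cosBump hk) hw ?_
    filter_upwards [hwell] with x hx
    have hsq : w x ^ 2 ≤ cosBump k m x ^ 2 := sq_le_sq' (abs_le.1 (hle x)).1 (abs_le.1 (hle x)).2
    by_cases hmem : x ∈ Set.Ioo (m - π / (2 * k)) (m + π / (2 * k))
    · exact mul_nonpos_of_nonpos_of_nonneg (sub_nonpos.2 (hx hmem)) (sub_nonneg.2 hsq)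
    · rw [Function.notMem_support.1 fun h => hmem (hsupp h),
        Function.notMem_support.1 fun h => hmem (support_cosBump_subset hk h), sub_self, mul_zero]
  have hnonneg : 0 ≤ IV (fun _ => -k ^ 2) w :=
    IV_neg_sq_nonneg hw (by linarith) hsupp hk.le (le_of_eq (by field_simp; ring))
  linarith [IV_neg_sq_cosBump (m := m) hk]

lemma IV_abs_sup_cosBump_le {V u : ℝ → ℝ} (hk : 0 < k) (hV : MemLp V ⊤ volume)
    (hwell : ∀ᵐ x, x ∈ Set.Ioo (m - π / (2 * k)) (m + π / (2 * k)) → V x ≤ -k ^ 2)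
    (hu : IsH1 u) : IV V (|u| ⊔ cosBump k m) ≤ IV V u := by
  have hinf : |(|u| ⊓ cosBump k m)| ≤ cosBump k m :=
    (abs_of_nonneg (le_inf (abs_nonneg u) (cosBump_nonneg k m))).trans_le inf_le_right
  have hmod := IV_sup_add_IV_inf hV hu.abs (isH1_cosBump (m := m) hk)
  rw [IV_abs hV hu] at hmod
  linarith [IV_cosBump_le hk hV hwell (hu.abs.inf (isH1_cosBump hk)) hinf]

lemma inKa_abs_sup_cosBump {u : ℝ → ℝ} (hk : 0 < k) (hu : IsH1 u) (hle : ∀ x, |u x| ≤ 1) :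
    InKa m (|u| ⊔ cosBump k m) := by
  refine (hu.abs.sup (isH1_cosBump hk)).inKa (fun x => ?_) ?_
  · have hnonneg : 0 ≤ (|u| ⊔ cosBump k m) x := (cosBump_nonneg k m x).trans le_sup_right
    rw [abs_of_nonneg hnonneg]
    exact sup_le (hle x) (cosBump_le_one k m x)
  · rw [Pi.sup_apply, cosBump_self]
    exact sup_eq_right.2 (hle m)

lemma inKa_cosBump (hk : 0 < k) : InKa m (cosBump k m) :=
  (isH1_cosBump hk).inKa
    (fun x => (abs_of_nonneg (cosBump_nonneg k m x)).trans_le (cosBump_le_one k m x))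
    (cosBump_self k m)

end CosBump

/-! ### The two infima -/

/-- The Rayleigh quotients `I(u;V) / ‖u‖_∞²`, `0 ≠ u ∈ H¹(ℝ)`, whose infimum is `m(V)`. -/
def rayleighQuotients (V : ℝ → ℝ) : Set ℝ :=
  {r : ℝ | ∃ u : ℝ → ℝ, IsH1 u ∧ u ≠ 0 ∧ r = IV V u / (supNorm u) ^ 2}

/-- The energies `I(u;V)`, `u ∈ K_a`, whose infimum is `F(a;V)`. -/
def constrainedEnergies (V : ℝ → ℝ) (a : ℝ) : Set ℝ :=
  {r : ℝ | ∃ u : ℝ → ℝ, InKa a u ∧ r = IV V u}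

section Infima

variable {V : ℝ → ℝ} {a r : ℝ}

lemma constrainedEnergies_subset_rayleighQuotients (V : ℝ → ℝ) (a : ℝ) :
    constrainedEnergies V a ⊆ rayleighQuotients V := by
  rintro _ ⟨u, ⟨hu, ha, hnorm⟩, rfl⟩
  refine ⟨u, hu, ?_, by rw [hnorm, one_pow, div_one]⟩
  rintro rfl
  exact zero_ne_one ha

lemma constrainedEnergies_nonempty (V : ℝ → ℝ) (a : ℝ) : (constrainedEnergies V a).Nonempty :=
  ⟨_, cosBump 1 a, inKa_cosBump one_pos, rfl⟩

lemma exists_abs_le_one_of_mem_rayleighQuotients (hr : r ∈ rayleighQuotients V) :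
    ∃ u : ℝ → ℝ, IsH1 u ∧ (∀ x, |u x| ≤ 1) ∧ IV V u = r := by
  obtain ⟨u, hu, hne, rfl⟩ := hr
  have hpos := hu.supNorm_pos hne
  refine ⟨(supNorm u)⁻¹ • u, hu.const_smul _, fun x => ?_, ?_⟩
  · rw [Pi.smul_apply, smul_eq_mul, abs_mul, abs_of_pos (inv_pos.2 hpos), inv_mul_le_iff₀ hpos,
      mul_one]
    exact hu.abs_le_supNorm x
  · rw [IV_smul, inv_pow, inv_mul_eq_div]

lemma mV_le_FV (hbdd : BddBelow (rayleighQuotients V)) (a : ℝ) : mV V ≤ FV V a :=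
  csInf_le_csInf hbdd (constrainedEnergies_nonempty V a)
    (constrainedEnergies_subset_rayleighQuotients V a)

theorem FV_eq_mV_of_le_neg_sq {k : ℝ} (hk : 0 < k) (hV : MemLp V ⊤ volume)
    (hbdd : BddBelow (rayleighQuotients V))
    (hwell : ∀ᵐ x, x ∈ Set.Ioo (a - π / (2 * k)) (a + π / (2 * k)) → V x ≤ -k ^ 2) :
    FV V a = mV V := by
  have hsub := constrainedEnergies_subset_rayleighQuotients V a
  refine (le_csInf ((constrainedEnergies_nonempty V a).mono hsub) fun r hr => ?_).antisymm
    (mV_le_FV hbdd a)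
  obtain ⟨u, hu, hle, rfl⟩ := exists_abs_le_one_of_mem_rayleighQuotients hr
  calc FV V a ≤ IV V (|u| ⊔ cosBump k a) :=
        csInf_le (hbdd.mono hsub) ⟨_, inKa_abs_sup_cosBump hk hu hle, rfl⟩
    _ ≤ IV V u := IV_abs_sup_cosBump_le hk hV hwell hu

lemma integrable_negPart_of_ae_nonneg_off {s : Set ℝ} (hs : volume s ≠ ⊤) (hV : MemLp V ⊤ volume)
    (hoff : ∀ᵐ x, x ∉ s → 0 ≤ V x) : Integrable fun x => (V x)⁻ := by
  have : IsFiniteMeasure (volume.restrict s) := isFiniteMeasure_restrict.2 hs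
  have hVs : IntegrableOn V s := memLp_one_iff_integrable.1 ((hV.restrict s).mono_exponent le_top)
  refine IntegrableOn.integrable_of_ae_notMem_eq_zero (s := s) hVs.neg_part ?_
  filter_upwards [hoff] with x hx hxs
  exact negPart_eq_zero.2 (hx hxs)

theorem bddBelow_rayleighQuotients {s : Set ℝ} (hs : volume s ≠ ⊤) (hV : MemLp V ⊤ volume)
    (hoff : ∀ᵐ x, x ∉ s → 0 ≤ V x) : BddBelow (rayleighQuotients V) := by
  refine ⟨-∫ x, (V x)⁻, fun r hr => ?_⟩
  obtain ⟨u, hu, hle, rfl⟩ := exists_abs_le_one_of_mem_rayleighQuotients hr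
  exact neg_integral_negPart_le_IV hV (integrable_negPart_of_ae_nonneg_off hs hV hoff) hu hle

end Infima

theorem trapped_mode_general {β b c : ℝ} {V : ℝ → ℝ} (hV : MemLp V ⊤ volume)
    (hbdd : BddBelow (rayleighQuotients V)) (hin : ∀ᵐ x, x ∈ Set.Ioo b c → V x ≤ -β)
    (hwell : π ≤ √β * (c - b)) :
    ∃ a ∈ Set.Icc b c, FV V a = mV V ∧ ∀ a' : ℝ, FV V a ≤ FV V a' := by
  have hk : 0 < √β := (sqrt_nonneg β).lt_of_ne' fun h => by
    rw [h, zero_mul] at hwell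
    exact pi_pos.not_ge hwell
  have hwidth : π / (2 * √β) ≤ (c - b) / 2 := by
    rw [div_le_iff₀ (by positivity)]
    linarith
  have hr : 0 < π / (2 * √β) := by positivity
  have hmin : FV V ((b + c) / 2) = mV V := by
    refine FV_eq_mV_of_le_neg_sq hk hV hbdd ?_
    filter_upwards [hin] with x hx hmem
    rw [sq_sqrt (sqrt_pos.1 hk).le]
    exact hx ⟨by linarith [hmem.1], by linarith [hmem.2]⟩
  exact ⟨(b + c) / 2, ⟨by linarith, by linarith⟩, hmin, fun a' => hmin.trans_le (mV_le_FV hbdd a')⟩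

/-- **Trapped mode in a potential well.** Let `α, β > 0`, `b < c`, and let `V ∈ L^∞(ℝ)`
satisfy `V ≥ α` a.e. on `(-∞,b) ∪ (c,∞)` and `V = -β` on `(b,c)`.
If `√β (c-b) ≥ π`, then there exists `a ∈ [b,c]` with `F(a;V) = m(V)`; in particular
`inf_{a∈ℝ} F(a;V) = m(V)` is attained at a point of `[b,c]`. -/
theorem trapped_mode (α β b c : ℝ) (hα : 0 < α) (hβ : 0 < β) (hbc : b < c)
    (V : ℝ → ℝ) (hV : MemLp V ⊤ (volume : Measure ℝ))
    (hout : ∀ᵐ x : ℝ, (x < b ∨ c < x) → α ≤ V x)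
    (hin : ∀ x ∈ Set.Ioo b c, V x = -β)
    (hwell : Real.sqrt β * (c - b) ≥ Real.pi) :
    ∃ a ∈ Set.Icc b c, FV V a = mV V ∧ ∀ a' : ℝ, FV V a ≤ FV V a' := by
  have hoff : ∀ᵐ x, x ∉ Set.Icc b c → 0 ≤ V x := hout.mono fun x hx hxs =>
    hα.le.trans (hx ((not_and_or.1 hxs).imp not_le.1 not_le.1))
  exact trapped_mode_general hV (bddBelow_rayleighQuotients measure_Icc_lt_top.ne hV hoff)
    (ae_of_all _ fun x hx => (hin x hx).le) hwell
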